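/- arXiv:2604.05752 — 10 statements merged into one kernel-verified Lean document; each statement's English description precedes it below -/
import Mathlib

section
/- Let D ⊆ ℝ × ℝ be open and φ : D → ℝ twice continuously differentiable, and let f be a solution of u' = φ(x,u) on an interval I. Then the function p_f(x) := ∂ᵤφ(x, f(x)) is differentiable on I and satisfies the identity p_f'(x) + p_f(x)² + 𝒦(x, f(x)) = 0 for all x ∈ I, where 𝒦 is the curvature of the ODE. -/
/-- Partial derivative of `φ` with respect to the second (dependent) variable `u`. -/
noncomputable def pderivU (φ : ℝ × ℝ → ℝ) (x u : ℝ) : ℝ :=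
  deriv (fun v => φ (x, v)) u

/-- Partial derivative of `φ` with respect to the first (independent) variable `x`. -/
noncomputable def pderivX (φ : ℝ × ℝ → ℝ) (x u : ℝ) : ℝ :=
  deriv (fun t => φ (t, u)) x

/-- Mixed second partial derivative `∂ₓ∂ᵤφ`. -/
noncomputable def pderivXU (φ : ℝ × ℝ → ℝ) (x u : ℝ) : ℝ :=
  deriv (fun t => pderivU φ t u) x

/-- Second partial derivative `∂ᵤ∂ᵤφ`. -/
noncomputable def pderivUU (φ : ℝ × ℝ → ℝ) (x u : ℝ) : ℝ :=
  deriv (fun v => pderivU φ x v) u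

/-- The curvature `𝒦(x,u) := −(∂ₓ∂ᵤφ(x,u) + (∂ᵤφ(x,u))² + φ(x,u)·∂ᵤ∂ᵤφ(x,u))`
of the ODE `u' = φ(x,u)`. -/
noncomputable def curvature (φ : ℝ × ℝ → ℝ) (x u : ℝ) : ℝ :=
  -(pderivXU φ x u + (pderivU φ x u) ^ 2 + φ (x, u) * pderivUU φ x u)

/-- If `φ` is C² on an open set `D` and `f` solves `u' = φ(x,u)` on an
open interval `I`, then `p_f(x) := ∂ᵤφ(x, f(x))` is differentiable on `I` and satisfies
`p_f'(x) + p_f(x)² + 𝒦(x, f(x)) = 0`. -/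
theorem stmt_0 (D : Set (ℝ × ℝ)) (hD : IsOpen D)
    (φ : ℝ × ℝ → ℝ) (hφ : ContDiffOn ℝ 2 φ D)
    (I : Set ℝ) (hI : IsOpen I) (f : ℝ → ℝ)
    (hfD : ∀ x ∈ I, (x, f x) ∈ D)
    (hf : ∀ x ∈ I, HasDerivAt f (φ (x, f x)) x) :
    ∀ x ∈ I, HasDerivAt (fun t => pderivU φ t (f t))
      (-((pderivU φ x (f x)) ^ 2 + curvature φ x (f x))) x := by
  intro x hx
  have hp := hfD x hx
  have hU : ∀ q ∈ D, pderivU φ q.1 q.2 = fderiv ℝ φ q (0, 1) := by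
    intro q hq
    have h1 : HasFDerivAt φ (fderiv ℝ φ q) (q.1, q.2) :=
      ((hφ.contDiffAt (hD.mem_nhds hq)).differentiableAt (by norm_num)).hasFDerivAt
    exact (h1.comp_hasDerivAt q.2 ((hasDerivAt_const q.2 q.1).prodMk (hasDerivAt_id' q.2))).deriv
  have hd : DifferentiableAt ℝ (fun q => fderiv ℝ φ q (0, 1)) (x, f x) := by
    have h2 : ContDiffAt ℝ 1 (fderiv ℝ φ) (x, f x) :=
      (hφ.contDiffAt (hD.mem_nhds hp)).fderiv_right (by norm_num)
    exact (h2.differentiableAt (by norm_num)).clm_apply (differentiableAt_const _)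
  have hg : DifferentiableAt ℝ (fun q : ℝ × ℝ => pderivU φ q.1 q.2) (x, f x) :=
    hd.congr_of_eventuallyEq (Filter.eventuallyEq_of_mem (hD.mem_nhds hp) hU)
  have hL := hg.hasFDerivAt
  generalize fderiv ℝ (fun q : ℝ × ℝ => pderivU φ q.1 q.2) (x, f x) = L at hL
  have hX : pderivXU φ x (f x) = L (1, 0) :=
    (HasFDerivAt.comp_hasDerivAt (l := fun q : ℝ × ℝ => pderivU φ q.1 q.2) (f := fun t => (t, f x)) x hL ((hasDerivAt_id' x).prodMk (hasDerivAt_const x (f x)))).deriv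
  have hUU : pderivUU φ x (f x) = L (0, 1) :=
    (hL.comp_hasDerivAt (f x) ((hasDerivAt_const (f x) x).prodMk (hasDerivAt_id' (f x)))).deriv
  have hm : HasDerivAt (fun t => pderivU φ t (f t)) (L (1, φ (x, f x))) x :=
    HasFDerivAt.comp_hasDerivAt (l := fun q : ℝ × ℝ => pderivU φ q.1 q.2) (f := fun t => (t, f t)) x hL ((hasDerivAt_id' x).prodMk (hf x hx))
  have hs : L (1, φ (x, f x)) = L (1, 0) + φ (x, f x) * L (0, 1) := by
    rw [← smul_eq_mul, ← map_smul, ← map_add]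
    simp
  convert hm using 1
  rw [hs, curvature, hX, hUU]
  ring
end

section
/- Let D ⊆ ℝ × ℝ be open, φ : D → ℝ twice continuously differentiable, and κ : ℝ → ℝ a function such that the curvature satisfies 𝒦(x,u) = κ(x) for all (x,u) ∈ D. Then for every solution f of u' = φ(x,u) on an interval I, the function p_f(x) := ∂ᵤφ(x, f(x)) satisfies the Riccati equation p_f'(x) + p_f(x)² + κ(x) = 0 for all x ∈ I. -/
/-- If the curvature of `u' = φ(x,u)` satisfies `𝒦(x,u) = κ(x)` on `D`,
then along every solution `f`, the function `p_f(x) := ∂ᵤφ(x, f(x))` satisfies the Riccati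
equation `p_f' + p_f² + κ = 0`. -/
theorem stmt_1 (D : Set (ℝ × ℝ)) (hD : IsOpen D)
    (φ : ℝ × ℝ → ℝ) (hφ : ContDiffOn ℝ 2 φ D)
    (κ : ℝ → ℝ) (hκ : ∀ x u : ℝ, (x, u) ∈ D → curvature φ x u = κ x)
    (I : Set ℝ) (hI : IsOpen I) (f : ℝ → ℝ)
    (hfD : ∀ x ∈ I, (x, f x) ∈ D)
    (hf : ∀ x ∈ I, HasDerivAt f (φ (x, f x)) x) :
    ∀ x ∈ I, HasDerivAt (fun t => pderivU φ t (f t))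
      (-((pderivU φ x (f x)) ^ 2 + κ x)) x := by
  intro x hx
  have hp := hfD x hx
  have hU : ∀ p ∈ D, pderivU φ p.1 p.2 = fderiv ℝ φ p (0, 1) := by
    intro p hpD
    have hd : HasFDerivAt φ (fderiv ℝ φ p) (p.1, p.2) :=
      ((hφ.contDiffAt (hD.mem_nhds hpD)).differentiableAt (by norm_num)).hasFDerivAt
    have hc : HasDerivAt (fun v : ℝ => (p.1, v)) ((0 : ℝ), (1 : ℝ)) p.2 :=
      (hasDerivAt_const p.2 p.1).prodMk (hasDerivAt_id p.2)
    exact (hd.comp_hasDerivAt p.2 hc).deriv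
  have hG : DifferentiableAt ℝ (fun p : ℝ × ℝ => pderivU φ p.1 p.2) (x, f x) := by
    have h1 : DifferentiableAt ℝ (fderiv ℝ φ) (x, f x) :=
      ((hφ.contDiffAt (hD.mem_nhds hp)).fderiv_right (m := 1) (by norm_num)).differentiableAt
        (by norm_num)
    have h2 : DifferentiableAt ℝ (fun p => fderiv ℝ φ p ((0 : ℝ), (1 : ℝ))) (x, f x) :=
      h1.clm_apply (differentiableAt_const _)
    refine h2.congr_of_eventuallyEq ?_
    filter_upwards [hD.mem_nhds hp] with p hpD using hU p hpD
  obtain ⟨L, hL⟩ := hG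
  have hX : pderivXU φ x (f x) = L (1, 0) := by
    have hc : HasDerivAt (fun t : ℝ => (t, f x)) ((1 : ℝ), (0 : ℝ)) x :=
      (hasDerivAt_id x).prodMk (hasDerivAt_const x (f x))
    exact (HasFDerivAt.comp_hasDerivAt (f := fun t : ℝ => (t, f x)) x hL hc).deriv
  have hUU : pderivUU φ x (f x) = L (0, 1) :=
    (hL.comp_hasDerivAt (f x)
      ((hasDerivAt_const (f x) x).prodMk (hasDerivAt_id (f x)))).deriv
  have hmain : HasDerivAt (fun t => pderivU φ t (f t)) (L (1, φ (x, f x))) x := by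
    have hc : HasDerivAt (fun t : ℝ => (t, f t)) ((1 : ℝ), φ (x, f x)) x :=
      (hasDerivAt_id x).prodMk (hf x hx)
    exact HasFDerivAt.comp_hasDerivAt (f := fun t : ℝ => (t, f t)) x hL hc
  have hlin : L (1, φ (x, f x)) = L (1, 0) + φ (x, f x) * L (0, 1) := by
    rw [← smul_eq_mul, ← map_smul, ← map_add]
    simp
  have hk := hκ x (f x) hp
  unfold curvature at hk
  convert hmain using 1
  rw [hlin, ← hX, ← hUU, ← hk]
  ring
end

section
/- Let D ⊆ ℝ × ℝ be open, φ : D → ℝ twice continuously differentiable, and κ : ℝ → ℝ a function. Suppose that for every solution f of u' = φ(x,u) on any open interval I, the function p_f(x) := ∂ᵤφ(x, f(x)) satisfies p_f'(x) + p_f(x)² + κ(x) = 0 on I. Then the curvature satisfies 𝒦(x,u) = κ(x) for all (x,u) ∈ D. -/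
/-- If along every solution `f` of `u' = φ(x,u)` on any open interval the
function `p_f(x) := ∂ᵤφ(x, f(x))` satisfies `p_f' + p_f² + κ = 0`, then the curvature
satisfies `𝒦(x,u) = κ(x)` on `D`. -/
theorem stmt_2 (D : Set (ℝ × ℝ)) (hD : IsOpen D)
    (φ : ℝ × ℝ → ℝ) (hφ : ContDiffOn ℝ 2 φ D) (κ : ℝ → ℝ)
    (h : ∀ (a b : ℝ) (f : ℝ → ℝ),
      (∀ x ∈ Set.Ioo a b, (x, f x) ∈ D) →
      (∀ x ∈ Set.Ioo a b, HasDerivAt f (φ (x, f x)) x) →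
      ∀ x ∈ Set.Ioo a b,
        deriv (fun t => pderivU φ t (f t)) x + (pderivU φ x (f x)) ^ 2 + κ x = 0) :
    ∀ x u : ℝ, (x, u) ∈ D → curvature φ x u = κ x := by
  intro x u hxu
  have hc : ContDiffAt ℝ 2 φ (x, u) := hφ.contDiffAt (hD.mem_nhds hxu)
  -- the partial derivative as a differentiable function on the plane
  have hG : ∀ p ∈ D, pderivU φ p.1 p.2 = fderiv ℝ φ p (0, 1) := by
    intro p hp
    have h1 : HasFDerivAt φ (fderiv ℝ φ p) (p.1, p.2) :=
      ((hφ.contDiffAt (hD.mem_nhds hp)).differentiableAt (by norm_num)).hasFDerivAt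
    have h2 : HasDerivAt (fun v : ℝ => (p.1, v)) ((0 : ℝ), (1 : ℝ)) p.2 :=
      (hasDerivAt_const _ _).prodMk (hasDerivAt_id _)
    exact (h1.comp_hasDerivAt p.2 h2).deriv
  have hd : DifferentiableAt ℝ (fun p => fderiv ℝ φ p (0, 1)) (x, u) := by
    have : DifferentiableAt ℝ (fderiv ℝ φ) (x, u) :=
      (hc.fderiv_right (m := 1) (by norm_num)).differentiableAt (by norm_num)
    exact this.clm_apply (differentiableAt_const _)
  obtain ⟨L, hL⟩ : ∃ L : ℝ × ℝ →L[ℝ] ℝ, HasFDerivAt (fun p : ℝ × ℝ => pderivU φ p.1 p.2) L (x, u) := by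
    refine ⟨_, hd.hasFDerivAt.congr_of_eventuallyEq ?_⟩
    filter_upwards [hD.mem_nhds hxu] with p hp using hG p hp
  have hXU : pderivXU φ x u = L (1, 0) := by
    have h2 : HasDerivAt (fun t : ℝ => (t, u)) ((1 : ℝ), (0 : ℝ)) x :=
      (hasDerivAt_id _).prodMk (hasDerivAt_const _ _)
    exact (hL.comp_hasDerivAt x h2).deriv
  have hUU : pderivUU φ x u = L (0, 1) := by
    have h2 : HasDerivAt (fun v : ℝ => (x, v)) ((0 : ℝ), (1 : ℝ)) u :=
      (hasDerivAt_const _ _).prodMk (hasDerivAt_id _)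
    exact (hL.comp_hasDerivAt u h2).deriv
  -- a local solution through the point
  have hF : ContDiffAt ℝ 1 (fun p : ℝ × ℝ => ((1 : ℝ), φ p)) (x, u) :=
    contDiffAt_const.prodMk (hc.of_le (by norm_num))
  obtain ⟨α, hα0, ε, hε, hα⟩ :=
    hF.exists_forall_mem_closedBall_exists_eq_forall_mem_Ioo_hasDerivAt₀ x
  have hx : x ∈ Set.Ioo (x - ε) (x + ε) := ⟨by linarith, by linarith⟩
  have h1 : ∀ t ∈ Set.Ioo (x - ε) (x + ε), HasDerivAt (fun s => (α s).1) 1 t :=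
    fun t ht => (ContinuousLinearMap.fst ℝ ℝ ℝ).hasFDerivAt.comp_hasDerivAt t (hα t ht)
  have h2 : ∀ t ∈ Set.Ioo (x - ε) (x + ε), HasDerivAt (fun s => (α s).2) (φ (α t)) t :=
    fun t ht => (ContinuousLinearMap.snd ℝ ℝ ℝ).hasFDerivAt.comp_hasDerivAt t (hα t ht)
  have hfst : ∀ t ∈ Set.Ioo (x - ε) (x + ε), (α t).1 = t := by
    intro t ht
    have hz : ∀ s ∈ Set.Ioo (x - ε) (x + ε), HasDerivAt (fun s => (α s).1 - s) 0 s := by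
      intro s hs
      have h0 := (h1 s hs).sub (hasDerivAt_id s)
      rw [sub_self] at h0
      exact h0
    have := isOpen_Ioo.is_const_of_deriv_eq_zero isPreconnected_Ioo
      (fun s hs => (hz s hs).differentiableAt.differentiableWithinAt)
      (fun s hs => (hz s hs).deriv) ht hx
    simp only [hα0] at this
    linarith
  have heq : ∀ t ∈ Set.Ioo (x - ε) (x + ε), α t = (t, (α t).2) :=
    fun t ht => Prod.ext (hfst t ht) rfl
  have hnh : α ⁻¹' D ∈ nhds x :=
    (hα x hx).continuousAt.preimage_mem_nhds (by rw [hα0]; exact hD.mem_nhds hxu)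
  obtain ⟨δ, hδ, hball⟩ := Metric.mem_nhds_iff.1 hnh
  rw [Real.ball_eq_Ioo] at hball
  have hmin : 0 < min ε δ := lt_min hε hδ
  have hsub1 : ∀ t ∈ Set.Ioo (x - min ε δ) (x + min ε δ), t ∈ Set.Ioo (x - ε) (x + ε) :=
    fun t ht => ⟨by linarith [ht.1, min_le_left ε δ], by linarith [ht.2, min_le_left ε δ]⟩
  have hsub2 : ∀ t ∈ Set.Ioo (x - min ε δ) (x + min ε δ), α t ∈ D :=
    fun t ht => hball
      ⟨by linarith [ht.1, min_le_right ε δ], by linarith [ht.2, min_le_right ε δ]⟩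
  have key := h (x - min ε δ) (x + min ε δ) (fun s => (α s).2)
    (fun t ht => by
      have := hsub2 t ht
      rwa [heq t (hsub1 t ht)] at this)
    (fun t ht => by
      have := h2 t (hsub1 t ht)
      rwa [heq t (hsub1 t ht)] at this)
    x ⟨by linarith, by linarith⟩
  have hu : (α x).2 = u := by rw [hα0]
  have hder : deriv (fun t => pderivU φ t (α t).2) x = L (1, φ (x, u)) := by
    have h3 : HasDerivAt (fun t : ℝ => (t, (α t).2)) ((1 : ℝ), φ (x, u)) x := by
      have := h2 x hx
      rw [hα0] at this
      exact (hasDerivAt_id _).prodMk this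
    have hL' : HasFDerivAt (fun p : ℝ × ℝ => pderivU φ p.1 p.2) L (x, (α x).2) := by
      rw [hu]; exact hL
    exact (hL'.comp_hasDerivAt x h3).deriv
  have hlin : L (1, φ (x, u)) = L (1, 0) + φ (x, u) * L (0, 1) := by
    have : ((1 : ℝ), φ (x, u)) = (1, 0) + φ (x, u) • ((0 : ℝ), (1 : ℝ)) := by simp
    rw [this, map_add, map_smul, smul_eq_mul]
  simp only [hder, hu] at key
  unfold curvature
  rw [hXU, hUU]
  linarith
end

section
/- Let D ⊆ ℝ × ℝ be open, φ : D → ℝ twice continuously differentiable, and κ : ℝ → ℝ a function such that the curvature satisfies 𝒦(x,u) = κ(x) for all (x,u) ∈ D. Define C(x,u) := ∂ₓφ(x,u) + φ(x,u)·∂ᵤφ(x,u) + κ(x)·u on D. Then ∂ᵤC(x,u) = 0 for every (x,u) ∈ D; in particular, if for each x the fiber D_x = {u : (x,u) ∈ D} is an interval, then C(x,u) depends only on x. -/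
theorem aux_all (D : Set (ℝ × ℝ)) (hD : IsOpen D)
    (φ : ℝ × ℝ → ℝ) (hφ : ContDiffOn ℝ 2 φ D)
    (κ : ℝ → ℝ) (hκ : ∀ x u : ℝ, (x, u) ∈ D → curvature φ x u = κ x)
    (x u : ℝ) (h : (x, u) ∈ D) :
    HasDerivAt (fun v => pderivX φ x v + φ (x, v) * pderivU φ x v + κ x * v) 0 u := by
  have hvl : ∀ x u : ℝ, HasDerivAt (fun v : ℝ => ((x, v) : ℝ × ℝ)) ((0 : ℝ), (1 : ℝ)) u :=
    fun x u => (hasDerivAt_const u x).prodMk (hasDerivAt_id u)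
  have hhl : ∀ x u : ℝ, HasDerivAt (fun t : ℝ => ((t, u) : ℝ × ℝ)) ((1 : ℝ), (0 : ℝ)) x :=
    fun x u => (hasDerivAt_id x).prodMk (hasDerivAt_const x u)
  have hc : ∀ p ∈ D, ContDiffAt ℝ 2 φ p := fun p hp => hφ.contDiffAt (hD.mem_nhds hp)
  have hd : ∀ p ∈ D, HasFDerivAt φ (fderiv ℝ φ p) p := fun p hp =>
    ((hc p hp).differentiableAt (by norm_num)).hasFDerivAt
  have hU : ∀ x u, (x, u) ∈ D → HasDerivAt (fun v => φ (x, v)) (fderiv ℝ φ (x, u) (0, 1)) u :=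
    fun x u hp => (hd _ hp).comp_hasDerivAt u (hvl x u)
  have hX : ∀ x u, (x, u) ∈ D → HasDerivAt (fun t => φ (t, u)) (fderiv ℝ φ (x, u) (1, 0)) x :=
    fun x u hp => (hd _ hp).comp_hasDerivAt x (hhl x u)
  have hF : HasFDerivAt (fderiv ℝ φ) (fderiv ℝ (fderiv ℝ φ) (x, u)) (x, u) :=
    (((hc _ h).fderiv_right (m := 1) (by norm_num)).differentiableAt (by norm_num)).hasFDerivAt
  have hsym : fderiv ℝ (fderiv ℝ φ) (x, u) (1, 0) (0, 1)
      = fderiv ℝ (fderiv ℝ φ) (x, u) (0, 1) (1, 0) :=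
    ((hc _ h).isSymmSndFDerivAt (by simp)) (1, 0) (0, 1)
  have hFv : HasDerivAt (fun v => fderiv ℝ φ (x, v)) (fderiv ℝ (fderiv ℝ φ) (x, u) (0, 1)) u :=
    hF.comp_hasDerivAt u (hvl x u)
  have hFh : HasDerivAt (fun t => fderiv ℝ φ (t, u)) (fderiv ℝ (fderiv ℝ φ) (x, u) (1, 0)) x :=
    hF.comp_hasDerivAt x (hhl x u)
  have ev : ∀ᶠ v in nhds u, (x, v) ∈ D :=
    (hvl x u).continuousAt.eventually (hD.mem_nhds h)
  have eh : ∀ᶠ t in nhds x, (t, u) ∈ D :=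
    (hhl x u).continuousAt.eventually (hD.mem_nhds h)
  have dUU : HasDerivAt (fun v => pderivU φ x v)
      (fderiv ℝ (fderiv ℝ φ) (x, u) (0, 1) (0, 1)) u := by
    have := hFv.clm_apply (hasDerivAt_const u ((0 : ℝ), (1 : ℝ)))
    simp only [map_zero, add_zero] at this
    exact this.congr_of_eventuallyEq (ev.mono fun v hv => (hU x v hv).deriv)
  have dXU : HasDerivAt (fun t => pderivU φ t u)
      (fderiv ℝ (fderiv ℝ φ) (x, u) (1, 0) (0, 1)) x := by
    have := hFh.clm_apply (hasDerivAt_const x ((0 : ℝ), (1 : ℝ)))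
    simp only [map_zero, add_zero] at this
    exact this.congr_of_eventuallyEq (eh.mono fun v hv => (hU v u hv).deriv)
  have dUX : HasDerivAt (fun v => pderivX φ x v)
      (fderiv ℝ (fderiv ℝ φ) (x, u) (0, 1) (1, 0)) u := by
    have := hFv.clm_apply (hasDerivAt_const u ((1 : ℝ), (0 : ℝ)))
    simp only [map_zero, add_zero] at this
    exact this.congr_of_eventuallyEq (ev.mono fun v hv => (hX x v hv).deriv)
  have key := hκ x u h
  have e1 : pderivXU φ x u = _ := dXU.deriv
  have e2 : pderivUU φ x u = _ := dUU.deriv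
  have e3 : pderivU φ x u = _ := (hU x u h).deriv
  rw [curvature, e1, e2, e3, hsym] at key
  refine ((dUX.add ((hU x u h).mul dUU)).add ((hasDerivAt_id u).const_mul (κ x))).congr_deriv ?_
  rw [← key, e3]
  ring

/-- If `𝒦(x,u) = κ(x)` on `D`, then the function
`C(x,u) := ∂ₓφ(x,u) + φ(x,u)·∂ᵤφ(x,u) + κ(x)·u` satisfies `∂ᵤC(x,u) = 0` on `D`;
in particular, if each fiber `D_x` is an interval, then `C` depends only on `x`. -/
theorem stmt_3 (D : Set (ℝ × ℝ)) (hD : IsOpen D)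
    (φ : ℝ × ℝ → ℝ) (hφ : ContDiffOn ℝ 2 φ D)
    (κ : ℝ → ℝ) (hκ : ∀ x u : ℝ, (x, u) ∈ D → curvature φ x u = κ x) :
    (∀ x u : ℝ, (x, u) ∈ D →
      deriv (fun v => pderivX φ x v + φ (x, v) * pderivU φ x v + κ x * v) u = 0) ∧
    ((∀ x : ℝ, Set.OrdConnected {u : ℝ | (x, u) ∈ D}) →
      ∀ x u₁ u₂ : ℝ, (x, u₁) ∈ D → (x, u₂) ∈ D →
        pderivX φ x u₁ + φ (x, u₁) * pderivU φ x u₁ + κ x * u₁ =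
          pderivX φ x u₂ + φ (x, u₂) * pderivU φ x u₂ + κ x * u₂) := by
  have H := aux_all D hD φ hφ κ hκ
  refine ⟨fun x u h => (H x u h).deriv, fun hI x u₁ u₂ h₁ h₂ => ?_⟩
  have hconv : Convex ℝ {u : ℝ | (x, u) ∈ D} := (hI x).convex
  have := hconv.norm_image_sub_le_of_norm_hasDerivWithin_le (C := 0)
    (fun v hv => (H x v hv).hasDerivWithinAt) (fun v hv => by simp) h₂ h₁
  rw [zero_mul] at this
  exact sub_eq_zero.1 (norm_le_zero_iff.1 this)
end

section
/- Let D ⊆ ℝ × ℝ be open with connected fibers D_x = {u : (x,u) ∈ D}, let φ : D → ℝ be twice continuously differentiable, and let κ : ℝ → ℝ satisfy 𝒦(x,u) = κ(x) for all (x,u) ∈ D. Then there exists a function c : ℝ → ℝ such that every solution f of u' = φ(x,u) on an interval I is twice differentiable and satisfies the non-homogeneous linear equation f''(x) + κ(x)·f(x) = c(x) for all x ∈ I. -/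
theorem aux_main (D : Set (ℝ × ℝ)) (hD : IsOpen D)
    (φ : ℝ × ℝ → ℝ) (hφ : ContDiffOn ℝ 2 φ D) (x u : ℝ) (h : (x, u) ∈ D) :
    HasDerivAt (fun v => fderiv ℝ φ (x, v) (1, φ (x, v))) (-curvature φ x u) u := by
  have hA : ∀ p ∈ D, ContDiffAt ℝ 2 φ p := fun p hp => hφ.contDiffAt (hD.mem_nhds hp)
  have hd : ∀ p ∈ D, HasFDerivAt φ (fderiv ℝ φ p) p := fun p hp =>
    ((hA p hp).differentiableAt (by norm_num)).hasFDerivAt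
  have hv : ∀ x u : ℝ, HasDerivAt (fun v : ℝ => (x, v)) ((0 : ℝ), (1 : ℝ)) u := fun x u =>
    (hasDerivAt_const u x).prodMk (hasDerivAt_id u)
  have hh : ∀ x u : ℝ, HasDerivAt (fun t : ℝ => (t, u)) ((1 : ℝ), (0 : ℝ)) x := fun x u =>
    (hasDerivAt_id x).prodMk (hasDerivAt_const x u)
  have hU : ∀ p ∈ D, pderivU φ p.1 p.2 = fderiv ℝ φ p (0, 1) := fun p hp =>
    ((hd p hp).comp_hasDerivAt p.2 (hv p.1 p.2)).deriv
  have hd2 : HasFDerivAt (fderiv ℝ φ) (fderiv ℝ (fderiv ℝ φ) (x, u)) (x, u) :=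
    (((hA _ h).fderiv_right (m := 1) (by norm_num)).differentiableAt (by norm_num)).hasFDerivAt
  have hsymm : IsSymmSndFDerivAt ℝ φ (x, u) := (hA _ h).isSymmSndFDerivAt (by simp)
  have dX : HasDerivAt (fun t : ℝ => fderiv ℝ φ (t, u))
      (fderiv ℝ (fderiv ℝ φ) (x, u) (1, 0)) x :=
    HasFDerivAt.comp_hasDerivAt x (f := fun t : ℝ => (t, u)) hd2 (hh x u)
  have dU : HasDerivAt (fun v : ℝ => fderiv ℝ φ (x, v))
      (fderiv ℝ (fderiv ℝ φ) (x, u) (0, 1)) u :=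
    HasFDerivAt.comp_hasDerivAt u (f := fun v : ℝ => (x, v)) hd2 (hv x u)
  have e1 : ∀ᶠ p in nhds (x, u), p ∈ D := hD.mem_nhds h
  have hXU : pderivXU φ x u = fderiv ℝ (fderiv ℝ φ) (x, u) (1, 0) (0, 1) := by
    have h1 := dX.clm_apply (hasDerivAt_const x ((0 : ℝ), (1 : ℝ)))
    have h2 : (fun t => pderivU φ t u) =ᶠ[nhds x]
        fun t => fderiv ℝ φ (t, u) (0, 1) := by
      have := (hh x u).continuousAt.eventually e1
      filter_upwards [this] with t ht using hU (t, u) ht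
    unfold pderivXU
    rw [h2.deriv_eq, h1.deriv]
    simp
  have hUU : pderivUU φ x u = fderiv ℝ (fderiv ℝ φ) (x, u) (0, 1) (0, 1) := by
    have h1 := dU.clm_apply (hasDerivAt_const u ((0 : ℝ), (1 : ℝ)))
    have h2 : (fun v => pderivU φ x v) =ᶠ[nhds u]
        fun v => fderiv ℝ φ (x, v) (0, 1) := by
      have := (hv x u).continuousAt.eventually e1
      filter_upwards [this] with t ht using hU (x, t) ht
    unfold pderivUU
    rw [h2.deriv_eq, h1.deriv]
    simp
  have hφ1 : HasDerivAt (fun v => φ (x, v)) (fderiv ℝ φ (x, u) (0, 1)) u :=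
    (hd _ h).comp_hasDerivAt u (hv x u)
  have key := dU.clm_apply
    ((hasDerivAt_const u (1 : ℝ)).prodMk hφ1)
  refine key.congr_deriv ?_
  have hs : ∀ (L : ℝ × ℝ →L[ℝ] ℝ) (a b : ℝ), L (a, b) = a * L (1, 0) + b * L (0, 1) := by
    intro L a b
    have : ((a, b) : ℝ × ℝ) = a • ((1 : ℝ), (0 : ℝ)) + b • ((0 : ℝ), (1 : ℝ)) := by simp
    rw [this, map_add, map_smul, map_smul]; rfl
  unfold curvature
  rw [hXU, hUU, hU _ h, hsymm.eq (1, 0) (0, 1)]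
  rw [hs _ 1 (φ (x, u)), hs _ 0 (fderiv ℝ φ (x, u) (0, 1))]
  ring

/-- If `D` has connected (order-connected) fibers and `𝒦(x,u) = κ(x)` on
`D`, then there is a function `c : ℝ → ℝ` such that every solution `f` of `u' = φ(x,u)` on
an open interval is twice differentiable and satisfies `f'' + κ·f = c`. -/
theorem stmt_4 (D : Set (ℝ × ℝ)) (hD : IsOpen D)
    (hfib : ∀ x : ℝ, Set.OrdConnected {u : ℝ | (x, u) ∈ D})
    (φ : ℝ × ℝ → ℝ) (hφ : ContDiffOn ℝ 2 φ D)
    (κ : ℝ → ℝ) (hκ : ∀ x u : ℝ, (x, u) ∈ D → curvature φ x u = κ x) :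
    ∃ c : ℝ → ℝ, ∀ (I : Set ℝ), IsOpen I → ∀ f : ℝ → ℝ,
      (∀ x ∈ I, (x, f x) ∈ D) → (∀ x ∈ I, HasDerivAt f (φ (x, f x)) x) →
      ∀ x ∈ I, HasDerivAt (deriv f) (c x - κ x * f x) x := by
  classical
  let g : ℝ → ℝ → ℝ := fun x u => fderiv ℝ φ (x, u) (1, φ (x, u)) + κ x * u
  have hg : ∀ x u v, (x, u) ∈ D → (x, v) ∈ D → g x u = g x v := by
    intro x u v hu hv
    have hder : ∀ w ∈ {u : ℝ | (x, u) ∈ D}, HasDerivAt (g x) 0 w := by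
      intro w hw
      have h1 := (aux_main D hD φ hφ x w hw).add ((hasDerivAt_id w).const_mul (κ x))
      refine h1.congr_deriv ?_
      rw [hκ x w hw]; ring
    have ho : IsOpen {u : ℝ | (x, u) ∈ D} := hD.preimage (by fun_prop)
    exact ho.is_const_of_deriv_eq_zero (hfib x).isPreconnected
      (fun w hw => (hder w hw).differentiableAt.differentiableWithinAt)
      (fun w hw => (hder w hw).deriv) hu hv
  refine ⟨fun x => if h : ∃ u, (x, u) ∈ D then g x h.choose else 0, ?_⟩
  intro I hI f hfD hf x hx
  have hex : ∃ u, (x, u) ∈ D := ⟨_, hfD x hx⟩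
  have hc : (if h : ∃ u, (x, u) ∈ D then g x h.choose else 0) = g x (f x) := by
    rw [dif_pos hex]
    exact hg x _ _ hex.choose_spec (hfD x hx)
  have hdφ : HasFDerivAt φ (fderiv ℝ φ (x, f x)) (x, f x) :=
    ((hφ.contDiffAt (hD.mem_nhds (hfD x hx))).differentiableAt (by norm_num)).hasFDerivAt
  have h1 := HasFDerivAt.comp_hasDerivAt x (f := fun t => (t, f t)) hdφ
    ((hasDerivAt_id x).prodMk (hf x hx))
  have h2 : deriv f =ᶠ[nhds x] φ ∘ fun t => (t, f t) := by
    filter_upwards [hI.mem_nhds hx] with t ht using (hf t ht).deriv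
  refine (h1.congr_of_eventuallyEq h2).congr_deriv ?_
  beta_reduce
  rw [hc]
  simp [g]
end

section
/- Let D ⊆ ℝ × ℝ be open, φ : D → ℝ twice continuously differentiable, and κ, c : ℝ → ℝ functions. Suppose every solution f of u' = φ(x,u) on any open interval satisfies f''(x) + κ(x)·f(x) = c(x) wherever defined. Then the curvature satisfies 𝒦(x,u) = κ(x) for all (x,u) ∈ D. -/
open Filter Topology in
lemma aux_exists_sol (D : Set (ℝ × ℝ)) (hD : IsOpen D) (φ : ℝ × ℝ → ℝ) (hφ : ContDiffOn ℝ 2 φ D)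
    (x u : ℝ) (hx : (x, u) ∈ D) :
    ∃ (f : ℝ → ℝ) (ε : ℝ), 0 < ε ∧ f x = u ∧ ∀ t ∈ Set.Ioo (x - ε) (x + ε),
      (t, f t) ∈ D ∧ HasDerivAt f (φ (t, f t)) t := by
  have hc : ContDiffAt ℝ 2 φ (x, u) := hφ.contDiffAt (hD.mem_nhds hx)
  have hv : ContDiffAt ℝ 1 (fun p : ℝ × ℝ => ((1 : ℝ), φ p)) (x, u) :=
    contDiffAt_const.prodMk (hc.of_le (by norm_num))
  obtain ⟨α, h0, ε, hε, hα⟩ :=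
    hv.exists_forall_mem_closedBall_exists_eq_forall_mem_Ioo_hasDerivAt₀ x
  have hxm : x ∈ Set.Ioo (x - ε) (x + ε) := ⟨by linarith, by linarith⟩
  have h1 : ∀ t ∈ Set.Ioo (x - ε) (x + ε), HasDerivAt (fun s => (α s).1) 1 t := fun t ht =>
    (ContinuousLinearMap.fst ℝ ℝ ℝ).hasFDerivAt.comp_hasDerivAt t (hα t ht)
  have h2 : ∀ t ∈ Set.Ioo (x - ε) (x + ε), HasDerivAt (fun s => (α s).2) (φ (α t)) t :=
    fun t ht => (ContinuousLinearMap.snd ℝ ℝ ℝ).hasFDerivAt.comp_hasDerivAt t (hα t ht)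
  have heq : Set.EqOn (fun s => (α s).1) (fun s => s) (Set.Ioo (x - ε) (x + ε)) := by
    refine ODE_solution_unique_of_mem_Ioo (v := fun _ _ => (1 : ℝ)) (s := fun _ => Set.univ)
      (K := 0) (t₀ := x) (fun t _ => ?_) hxm (fun t ht => ⟨h1 t ht, trivial⟩)
      (fun t _ => ⟨hasDerivAt_id t, trivial⟩) (by simp [h0])
    exact (LipschitzWith.const (1 : ℝ)).lipschitzOnWith
  have hpt : ∀ t ∈ Set.Ioo (x - ε) (x + ε), α t = (t, (α t).2) := fun t ht =>
    Prod.ext (heq ht) rfl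
  have hDm : ∀ᶠ t in 𝓝 x, α t ∈ D :=
    (hα x hxm).continuousAt.eventually_mem (by rw [h0]; exact hD.mem_nhds hx)
  obtain ⟨δ, hδ, hδD⟩ := Metric.eventually_nhds_iff_ball.1 hDm
  refine ⟨fun s => (α s).2, min ε δ, lt_min hε hδ, by simp [h0], fun t ht => ?_⟩
  have hm1 := min_le_left ε δ
  have hm2 := min_le_right ε δ
  have ht1 : t ∈ Set.Ioo (x - ε) (x + ε) := ⟨by linarith [ht.1], by linarith [ht.2]⟩
  have ht2 : t ∈ Metric.ball x δ := by
    rw [Real.ball_eq_Ioo]; exact ⟨by linarith [ht.1], by linarith [ht.2]⟩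
  have := hδD t ht2
  have h3 := h2 t ht1
  rw [hpt t ht1] at this
  rw [hpt t ht1] at h3
  exact ⟨this, h3⟩

/-- If every solution `f` of `u' = φ(x,u)` on any open interval satisfies
`f'' + κ·f = c` wherever defined, then the curvature satisfies `𝒦(x,u) = κ(x)` on `D`. -/
theorem stmt_5 (D : Set (ℝ × ℝ)) (hD : IsOpen D)
    (φ : ℝ × ℝ → ℝ) (hφ : ContDiffOn ℝ 2 φ D) (κ c : ℝ → ℝ)
    (h : ∀ (a b : ℝ) (f : ℝ → ℝ),
      (∀ x ∈ Set.Ioo a b, (x, f x) ∈ D) →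
      (∀ x ∈ Set.Ioo a b, HasDerivAt f (φ (x, f x)) x) →
      ∀ x ∈ Set.Ioo a b, deriv (deriv f) x + κ x * f x = c x) :
    ∀ x u : ℝ, (x, u) ∈ D → curvature φ x u = κ x := by
  have hat : ∀ p ∈ D, ContDiffAt ℝ 2 φ p := fun p hp => hφ.contDiffAt (hD.mem_nhds hp)
  have hdiff : ∀ p ∈ D, HasFDerivAt φ (fderiv ℝ φ p) p := fun p hp =>
    ((hat p hp).differentiableAt (by norm_num)).hasFDerivAt
  have key : ∀ x u : ℝ, (x, u) ∈ D → fderiv ℝ φ (x, u) (1, φ (x, u)) + κ x * u = c x := by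
    intro x u hx
    obtain ⟨f, ε, hε, hfx, hf⟩ := aux_exists_sol D hD φ hφ x u hx
    have hxm : x ∈ Set.Ioo (x - ε) (x + ε) := ⟨by linarith, by linarith⟩
    have h1 := h _ _ f (fun t ht => (hf t ht).1) (fun t ht => (hf t ht).2) x hxm
    have hev : deriv f =ᶠ[nhds x] fun t => φ (t, f t) := by
      filter_upwards [isOpen_Ioo.mem_nhds hxm] with t ht
      exact (hf t ht).2.deriv
    have hd : HasDerivAt (fun t => φ (t, f t)) (fderiv ℝ φ (x, f x) (1, φ (x, f x))) x :=
      (hdiff _ (hf x hxm).1).comp_hasDerivAt x ((hasDerivAt_id x).prodMk (hf x hxm).2)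
    rw [hev.deriv_eq, hd.deriv, hfx] at h1
    exact h1
  intro x u hx
  have hU : ∀ y v : ℝ, (y, v) ∈ D → pderivU φ y v = fderiv ℝ φ (y, v) (0, 1) := fun y v hp =>
    ((hdiff _ hp).comp_hasDerivAt v ((hasDerivAt_const v y).prodMk (hasDerivAt_id v))).deriv
  have h2 : HasFDerivAt (fderiv ℝ φ) (fderiv ℝ (fderiv ℝ φ) (x, u)) (x, u) :=
    (((hat _ hx).fderiv_right (m := 1) (by norm_num)).differentiableAt (by norm_num)).hasFDerivAt
  have hsym : IsSymmSndFDerivAt ℝ φ (x, u) := (hat _ hx).isSymmSndFDerivAt (by simp)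
  have lx : HasDerivAt (fun t : ℝ => (t, u)) ((1 : ℝ), (0 : ℝ)) x :=
    (hasDerivAt_id x).prodMk (hasDerivAt_const x u)
  have lu : HasDerivAt (fun t : ℝ => (x, t)) ((0 : ℝ), (1 : ℝ)) u :=
    (hasDerivAt_const u x).prodMk (hasDerivAt_id u)
  have evx : ∀ᶠ t in nhds x, (t, u) ∈ D := lx.continuousAt.eventually_mem (hD.mem_nhds hx)
  have evu : ∀ᶠ t in nhds u, (x, t) ∈ D := lu.continuousAt.eventually_mem (hD.mem_nhds hx)
  have dx : HasDerivAt (fun t : ℝ => fderiv ℝ φ (t, u)) (fderiv ℝ (fderiv ℝ φ) (x, u) (1, 0)) x :=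
    h2.comp_hasDerivAt x lx
  have du : HasDerivAt (fun t : ℝ => fderiv ℝ φ (x, t)) (fderiv ℝ (fderiv ℝ φ) (x, u) (0, 1)) u :=
    h2.comp_hasDerivAt u lu
  have dφ : HasDerivAt (fun t : ℝ => φ (x, t)) (fderiv ℝ φ (x, u) (0, 1)) u :=
    (hdiff _ hx).comp_hasDerivAt u lu
  have eXU : pderivXU φ x u = fderiv ℝ (fderiv ℝ φ) (x, u) (1, 0) (0, 1) := by
    have e : (fun t => pderivU φ t u) =ᶠ[nhds x] fun t => fderiv ℝ φ (t, u) (0, 1) :=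
      evx.mono fun t ht => hU t u ht
    have := dx.clm_apply (hasDerivAt_const x ((0 : ℝ), (1 : ℝ)))
    rw [pderivXU, e.deriv_eq, this.deriv]
    simp
  have eUU : pderivUU φ x u = fderiv ℝ (fderiv ℝ φ) (x, u) (0, 1) (0, 1) := by
    have e : (fun t => pderivU φ x t) =ᶠ[nhds u] fun t => fderiv ℝ φ (x, t) (0, 1) :=
      evu.mono fun t ht => hU x t ht
    have := du.clm_apply (hasDerivAt_const u ((0 : ℝ), (1 : ℝ)))
    rw [pderivUU, e.deriv_eq, this.deriv]
    simp
  have dG := (du.clm_apply ((hasDerivAt_const u (1 : ℝ)).prodMk dφ)).add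
    ((hasDerivAt_id u).const_mul (κ x))
  have e0 : ((fun t : ℝ => fderiv ℝ φ (x, t) (1, φ (x, t))) + fun t => κ x * id t)
      =ᶠ[nhds u] fun _ => c x := evu.mono fun t ht => key x t ht
  have hz := dG.unique ((hasDerivAt_const u (c x)).congr_of_eventuallyEq e0)
  have lin : ∀ (L : ℝ × ℝ →L[ℝ] ℝ) (a b : ℝ), L (a, b) = a * L (1, 0) + b * L (0, 1) := by
    intro L a b
    have : ((a, b) : ℝ × ℝ) = a • ((1 : ℝ), (0 : ℝ)) + b • ((0 : ℝ), (1 : ℝ)) := by simp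
    rw [this, map_add, map_smul, map_smul]
    simp
  rw [lin _ 1 (φ (x, u)), lin _ 0 (fderiv ℝ φ (x, u) (0, 1)), hsym (0, 1) (1, 0)] at hz
  rw [curvature, eXU, eUU, hU x u hx]
  linarith
end

section
/- Let κ, c : ℝ → ℝ be smooth, let y₁, y₂ : ℝ → ℝ be linearly independent smooth solutions of y'' + κ·y = 0, let u_p be a smooth solution of u'' + κ·u = c, and let c₁, c₂ : J → ℝ be smooth on an open interval J with (c₁'(s), c₂'(s)) ≠ (0,0) for all s ∈ J. Define f(x;s) := u_p(x) + c₁(s)·y₁(x) + c₂(s)·y₂(x). Fix (x₀, s₀) with c₁'(s₀)·y₁(x₀) + c₂'(s₀)·y₂(x₀) ≠ 0. Then there exist an open set D ⊆ ℝ × ℝ containing (x₀, f(x₀;s₀)), an open interval J₀ ∋ s₀, an open interval I₀ ∋ x₀, and a twice continuously differentiable function φ : D → ℝ such that for every s ∈ J₀ the function x ↦ f(x;s) solves u' = φ(x,u) on I₀, and the curvature of φ satisfies 𝒦(x,u) = κ(x) for all (x,u) ∈ D. -/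
open Topology in
theorem exists_local_param (y₁ y₂ up : ℝ → ℝ)
    (hy₁s : ContDiff ℝ (⊤ : ℕ∞) y₁) (hy₂s : ContDiff ℝ (⊤ : ℕ∞) y₂) (hups : ContDiff ℝ (⊤ : ℕ∞) up)
    (J : Set ℝ) (hJ : IsOpen J)
    (c₁ c₂ : ℝ → ℝ) (hc₁ : ContDiffOn ℝ (⊤ : ℕ∞) c₁ J) (hc₂ : ContDiffOn ℝ (⊤ : ℕ∞) c₂ J)
    (x₀ s₀ : ℝ) (hs₀ : s₀ ∈ J)
    (hnz : deriv c₁ s₀ * y₁ x₀ + deriv c₂ s₀ * y₂ x₀ ≠ 0) :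
    ∃ (D : Set (ℝ × ℝ)) (S : ℝ × ℝ → ℝ) (I₀ J₀ : Set ℝ),
      IsOpen D ∧ IsOpen I₀ ∧ x₀ ∈ I₀ ∧ IsOpen J₀ ∧ s₀ ∈ J₀ ∧ J₀ ⊆ J ∧
      (∀ p ∈ D, ContDiffAt ℝ 2 S p ∧ S p ∈ J ∧
        deriv c₁ (S p) * y₁ p.1 + deriv c₂ (S p) * y₂ p.1 ≠ 0 ∧
        up p.1 + c₁ (S p) * y₁ p.1 + c₂ (S p) * y₂ p.1 = p.2) ∧
      (∀ s ∈ J₀, ∀ x ∈ I₀,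
        (x, up x + c₁ s * y₁ x + c₂ s * y₂ x) ∈ D ∧
        S (x, up x + c₁ s * y₁ x + c₂ s * y₂ x) = s) := by
  have hle : (2 : WithTop ℕ∞) ≤ ((⊤ : ℕ∞) : WithTop ℕ∞) :=
    WithTop.coe_le_coe.2 (le_top : (2 : ℕ∞) ≤ ⊤)
  have hle1 : (1 : WithTop ℕ∞) ≤ ((⊤ : ℕ∞) : WithTop ℕ∞) := by exact_mod_cast le_top
  set Ψ : ℝ × ℝ → ℝ × ℝ :=
    fun p => (p.1, up p.1 + c₁ p.2 * y₁ p.1 + c₂ p.2 * y₂ p.1) with hΨ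
  have hd : ∀ g : ℝ → ℝ, ContDiff ℝ (⊤ : ℕ∞) g → ∀ x, HasDerivAt g (deriv g x) x := fun g hg x =>
    ((hg.differentiable (by simp)) x).hasDerivAt
  have hca : ∀ g : ℝ → ℝ, ContDiffOn ℝ (⊤ : ℕ∞) g J → ∀ s ∈ J, ContDiffAt ℝ (⊤ : ℕ∞) g s :=
    fun g hg s hs => hg.contDiffAt (hJ.mem_nhds hs)
  have hdJ : ∀ g : ℝ → ℝ, ContDiffOn ℝ (⊤ : ℕ∞) g J → ∀ s ∈ J, HasDerivAt g (deriv g s) s :=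
    fun g hg s hs => ((hca g hg s hs).differentiableAt (by simp)).hasDerivAt
  have hΨc : ContDiffAt ℝ 2 Ψ (x₀, s₀) := by
    have h1 : ContDiffAt ℝ 2 (fun p : ℝ × ℝ => c₁ p.2) (x₀, s₀) :=
      ContDiffAt.comp (x₀, s₀) (g := c₁) ((hca c₁ hc₁ s₀ hs₀).of_le hle) contDiffAt_snd
    have h2 : ContDiffAt ℝ 2 (fun p : ℝ × ℝ => c₂ p.2) (x₀, s₀) :=
      ContDiffAt.comp (x₀, s₀) (g := c₂) ((hca c₂ hc₂ s₀ hs₀).of_le hle) contDiffAt_snd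
    have h3 : ∀ g : ℝ → ℝ, ContDiff ℝ (⊤ : ℕ∞) g →
        ContDiffAt ℝ 2 (fun p : ℝ × ℝ => g p.1) (x₀, s₀) := fun g hg =>
      ((hg.of_le hle).comp contDiff_fst).contDiffAt
    exact contDiffAt_fst.prodMk (((h3 _ hups).add (h1.mul (h3 _ hy₁s))).add (h2.mul (h3 _ hy₂s)))
  set a := deriv c₁ s₀ * y₁ x₀ + deriv c₂ s₀ * y₂ x₀ with ha
  set A := deriv up x₀ + c₁ s₀ * deriv y₁ x₀ + c₂ s₀ * deriv y₂ x₀ with hA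
  let F : (ℝ × ℝ) ≃L[ℝ] (ℝ × ℝ) := ContinuousLinearEquiv.equivOfInverse
    ((ContinuousLinearMap.fst ℝ ℝ ℝ).prod
      (A • ContinuousLinearMap.fst ℝ ℝ ℝ + a • ContinuousLinearMap.snd ℝ ℝ ℝ))
    ((ContinuousLinearMap.fst ℝ ℝ ℝ).prod
      ((-(A / a)) • ContinuousLinearMap.fst ℝ ℝ ℝ + a⁻¹ • ContinuousLinearMap.snd ℝ ℝ ℝ))
    (by
      intro p
      ext
      · simp
      · simp
        field_simp
        ring)
    (by
      intro p
      ext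
      · simp
      · simp
        field_simp
        ring)
  have hF : HasFDerivAt Ψ (F : (ℝ × ℝ) →L[ℝ] (ℝ × ℝ)) (x₀, s₀) := by
    have h3 : ∀ g : ℝ → ℝ, ContDiff ℝ (⊤ : ℕ∞) g → HasFDerivAt (fun p : ℝ × ℝ => g p.1)
        (deriv g x₀ • ContinuousLinearMap.fst ℝ ℝ ℝ) (x₀, s₀) := fun g hg =>
      HasDerivAt.comp_hasFDerivAt (x₀, s₀) (hd g hg x₀) hasFDerivAt_fst
    have h4 : ∀ g : ℝ → ℝ, ContDiffOn ℝ (⊤ : ℕ∞) g J → HasFDerivAt (fun p : ℝ × ℝ => g p.2)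
        (deriv g s₀ • ContinuousLinearMap.snd ℝ ℝ ℝ) (x₀, s₀) := fun g hg =>
      HasDerivAt.comp_hasFDerivAt (x₀, s₀) (hdJ g hg s₀ hs₀) hasFDerivAt_snd
    have h5 := (hasFDerivAt_fst (𝕜 := ℝ) (p := (x₀, s₀))).prodMk
      (((h3 _ hups).add ((h4 _ hc₁).mul (h3 _ hy₁s))).add ((h4 _ hc₂).mul (h3 _ hy₂s)))
    refine h5.congr_fderiv ?_
    ext
    · simp [F]
    · simp [F, hA]
    · simp [F]
    · simp [F, ha]
      ring
  set e := hΨc.toOpenPartialHomeomorph Ψ hF (by norm_num) with he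
  have hcoe : (e : ℝ × ℝ → ℝ × ℝ) = Ψ := rfl
  have hsrc : (x₀, s₀) ∈ e.source := hΨc.mem_toOpenPartialHomeomorph_source hF (by norm_num)
  have htgt : Ψ (x₀, s₀) ∈ e.target :=
    hΨc.image_mem_toOpenPartialHomeomorph_target hF (by norm_num)
  have hinv : e.symm (Ψ (x₀, s₀)) = (x₀, s₀) := e.left_inv hsrc
  have hsymm : ContDiffAt ℝ 2 e.symm (Ψ (x₀, s₀)) := hΨc.to_localInverse hF (by norm_num)
  have hdc : ∀ g : ℝ → ℝ, ContDiffOn ℝ (⊤ : ℕ∞) g J → ContinuousAt (deriv g) s₀ := fun g hg =>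
    (hg.continuousOn_deriv_of_isOpen hJ hle1).continuousAt (hJ.mem_nhds hs₀)
  have hac : ContinuousAt (fun p : ℝ × ℝ => deriv c₁ p.2 * y₁ p.1 + deriv c₂ p.2 * y₂ p.1)
      (x₀, s₀) := by
    have h4 : ∀ g : ℝ → ℝ, ContDiffOn ℝ (⊤ : ℕ∞) g J →
        ContinuousAt (fun p : ℝ × ℝ => deriv g p.2) (x₀, s₀) := fun g hg =>
      ContinuousAt.comp (g := deriv g) (f := Prod.snd) (hdc g hg) continuousAt_snd
    have h3 : ∀ g : ℝ → ℝ, ContDiff ℝ (⊤ : ℕ∞) g →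
        ContinuousAt (fun p : ℝ × ℝ => g p.1) (x₀, s₀) := fun g hg =>
      (hg.continuous.comp continuous_fst).continuousAt
    exact ((h4 _ hc₁).mul (h3 _ hy₁s)).add ((h4 _ hc₂).mul (h3 _ hy₂s))
  have hev : ∀ᶠ p : ℝ × ℝ in 𝓝 (x₀, s₀), p.2 ∈ J ∧
      deriv c₁ p.2 * y₁ p.1 + deriv c₂ p.2 * y₂ p.1 ≠ 0 :=
    (continuousAt_snd.eventually_mem (hJ.mem_nhds hs₀)).and (hac.eventually_ne hnz)
  have hev2 : ∀ᶠ q in 𝓝 (Ψ (x₀, s₀)), q ∈ e.target ∧ ContDiffAt ℝ 2 e.symm q ∧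
      ((e.symm q).2 ∈ J ∧
      deriv c₁ (e.symm q).2 * y₁ (e.symm q).1 + deriv c₂ (e.symm q).2 * y₂ (e.symm q).1 ≠ 0) := by
    refine Filter.Eventually.and (e.open_target.mem_nhds htgt) ((hsymm.eventually (by simp)).and ?_)
    have := hsymm.continuousAt.tendsto
    rw [hinv] at this
    exact this.eventually hev
  obtain ⟨D, hD, hDo, hmD⟩ := eventually_nhds_iff.1 hev2
  have hev3 : ∀ᶠ p : ℝ × ℝ in 𝓝 (x₀, s₀), Ψ p ∈ D ∧ p ∈ e.source ∧ p.2 ∈ J :=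
    (hΨc.continuousAt.eventually_mem (hDo.mem_nhds hmD)).and
      (Filter.Eventually.and (e.open_source.mem_nhds hsrc) (continuousAt_snd.eventually_mem (hJ.mem_nhds hs₀)))
  obtain ⟨V, hV, hVo, hmV⟩ := eventually_nhds_iff.1 hev3
  obtain ⟨I₀, J₀, hI, hJ₀, hxI, hsJ, hsub⟩ := isOpen_prod_iff.1 hVo x₀ s₀ hmV
  refine ⟨D, fun q => (e.symm q).2, I₀, J₀, hDo, hI, hxI, hJ₀, hsJ, ?_, ?_, ?_⟩
  · intro s hs
    exact (hV (x₀, s) (hsub ⟨hxI, hs⟩)).2.2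
  · intro q hq
    obtain ⟨h1, h2, h3, h4⟩ := hD q hq
    have h5 : Ψ (e.symm q) = q := e.right_inv h1
    have h6 : (e.symm q).1 = q.1 := by
      have := congrArg Prod.fst h5
      exact this
    have h7 : up (e.symm q).1 + c₁ (e.symm q).2 * y₁ (e.symm q).1
      + c₂ (e.symm q).2 * y₂ (e.symm q).1 = q.2 := by
      have := congrArg Prod.snd h5
      exact this
    rw [h6] at h4 h7
    exact ⟨contDiffAt_snd.comp q h2, h3, h4, h7⟩
  · intro s hs x hx
    obtain ⟨h1, h2, h3⟩ := hV (x, s) (hsub ⟨hx, hs⟩)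
    refine ⟨h1, ?_⟩
    have h5 : e.symm (Ψ (x, s)) = (x, s) := e.left_inv h2
    exact congrArg Prod.snd h5


/-- Given smooth `κ, c`, linearly independent smooth solutions `y₁, y₂` of
`y'' + κ·y = 0`, a smooth solution `u_p` of `u'' + κ·u = c`, and a smooth immersed curve
`(c₁, c₂)` on `J`, set `f(x;s) := u_p(x) + c₁(s)·y₁(x) + c₂(s)·y₂(x)`. If
`c₁'(s₀)·y₁(x₀) + c₂'(s₀)·y₂(x₀) ≠ 0`, then near `(x₀, s₀)` there is a C² function `φ` on
an open set `D ∋ (x₀, f(x₀;s₀))` such that each `f(·;s)` solves `u' = φ(x,u)` and the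
curvature of `φ` satisfies `𝒦(x,u) = κ(x)` on `D`. -/
theorem stmt_8 (κ c : ℝ → ℝ) (hκ : ContDiff ℝ (⊤ : ℕ∞) κ) (hc : ContDiff ℝ (⊤ : ℕ∞) c)
    (y₁ y₂ up : ℝ → ℝ)
    (hy₁s : ContDiff ℝ (⊤ : ℕ∞) y₁) (hy₂s : ContDiff ℝ (⊤ : ℕ∞) y₂) (hups : ContDiff ℝ (⊤ : ℕ∞) up)
    (hy₁ : ∀ x : ℝ, deriv (deriv y₁) x + κ x * y₁ x = 0)
    (hy₂ : ∀ x : ℝ, deriv (deriv y₂) x + κ x * y₂ x = 0)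
    (hli : LinearIndependent ℝ ![y₁, y₂])
    (hup : ∀ x : ℝ, deriv (deriv up) x + κ x * up x = c x)
    (J : Set ℝ) (hJ : IsOpen J)
    (c₁ c₂ : ℝ → ℝ) (hc₁ : ContDiffOn ℝ (⊤ : ℕ∞) c₁ J) (hc₂ : ContDiffOn ℝ (⊤ : ℕ∞) c₂ J)
    (himm : ∀ s ∈ J, (deriv c₁ s, deriv c₂ s) ≠ (0, 0))
    (x₀ s₀ : ℝ) (hs₀ : s₀ ∈ J)
    (hnz : deriv c₁ s₀ * y₁ x₀ + deriv c₂ s₀ * y₂ x₀ ≠ 0) :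
    ∃ (D : Set (ℝ × ℝ)) (φ : ℝ × ℝ → ℝ) (I₀ J₀ : Set ℝ),
      IsOpen D ∧ (x₀, up x₀ + c₁ s₀ * y₁ x₀ + c₂ s₀ * y₂ x₀) ∈ D ∧
      IsOpen I₀ ∧ x₀ ∈ I₀ ∧ IsOpen J₀ ∧ s₀ ∈ J₀ ∧ J₀ ⊆ J ∧
      ContDiffOn ℝ 2 φ D ∧
      (∀ s ∈ J₀, ∀ x ∈ I₀,
        (x, up x + c₁ s * y₁ x + c₂ s * y₂ x) ∈ D ∧
        HasDerivAt (fun t => up t + c₁ s * y₁ t + c₂ s * y₂ t)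
          (φ (x, up x + c₁ s * y₁ x + c₂ s * y₂ x)) x) ∧
      (∀ x u : ℝ, (x, u) ∈ D → curvature φ x u = κ x) := by
  have hle : (2 : WithTop ℕ∞) ≤ ((⊤ : ℕ∞) : WithTop ℕ∞) :=
    WithTop.coe_le_coe.2 (le_top : (2 : ℕ∞) ≤ ⊤)
  obtain ⟨D, S, I₀, J₀, hDo, hI, hxI, hJo, hsJ, hJJ, hD, hIJ⟩ :=
    exists_local_param y₁ y₂ up hy₁s hy₂s hups J hJ c₁ c₂ hc₁ hc₂ x₀ s₀ hs₀ hnz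
  have hd : ∀ g : ℝ → ℝ, ContDiff ℝ (⊤ : ℕ∞) g → ∀ x, HasDerivAt g (deriv g x) x := fun g hg x =>
    ((hg.differentiable (by simp)) x).hasDerivAt
  have hds : ∀ g : ℝ → ℝ, ContDiff ℝ (⊤ : ℕ∞) g → ContDiff ℝ (⊤ : ℕ∞) (deriv g) := fun g hg =>
    (contDiff_infty_iff_deriv.1 hg).2
  have hdsJ : ∀ g : ℝ → ℝ, ContDiffOn ℝ (⊤ : ℕ∞) g J → ContDiffOn ℝ (⊤ : ℕ∞) (deriv g) J :=
    fun g hg => ((contDiffOn_infty_iff_deriv_of_isOpen hJ).1 hg).2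
  have hca : ∀ g : ℝ → ℝ, ContDiffOn ℝ (⊤ : ℕ∞) g J → ∀ s ∈ J, ContDiffAt ℝ (⊤ : ℕ∞) g s :=
    fun g hg s hs => hg.contDiffAt (hJ.mem_nhds hs)
  have hdJ : ∀ g : ℝ → ℝ, ContDiffOn ℝ (⊤ : ℕ∞) g J → ∀ s ∈ J, HasDerivAt g (deriv g s) s :=
    fun g hg s hs => ((hca g hg s hs).differentiableAt (by simp)).hasDerivAt
  -- slices of `D`
  have hDu : ∀ x u : ℝ, (x, u) ∈ D → ∀ᶠ v in nhds u, (x, v) ∈ D := fun x u h =>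
    (Continuous.prodMk_right x).continuousAt.eventually_mem (hDo.mem_nhds h)
  have hDx : ∀ x u : ℝ, (x, u) ∈ D → ∀ᶠ t in nhds x, (t, u) ∈ D := fun x u h =>
    (Continuous.prodMk_left u).continuousAt.eventually_mem (hDo.mem_nhds h)
  -- partial derivatives of `S`
  have hSu : ∀ x u : ℝ, (x, u) ∈ D → HasDerivAt (fun v => S (x, v))
      (1 / (deriv c₁ (S (x, u)) * y₁ x + deriv c₂ (S (x, u)) * y₂ x)) u := by
    intro x u h
    obtain ⟨h1, h2, h3, h4⟩ := hD _ h
    have hdiff : DifferentiableAt ℝ (fun v => S (x, v)) u :=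
      (h1.differentiableAt (by norm_num)).comp (f := fun v : ℝ => (x, v)) u (by fun_prop)
    have hs := hdiff.hasDerivAt
    have hc1 := (hdJ c₁ hc₁ _ h2).comp u hs
    have hc2 := (hdJ c₂ hc₂ _ h2).comp u hs
    have h5 := ((hc1.mul_const (y₁ x)).const_add (up x)).add (hc2.mul_const (y₂ x))
    have h6 : HasDerivAt (fun v : ℝ => v) 1 u := hasDerivAt_id u
    have h7 := (h5.congr_of_eventuallyEq (f₁ := fun v : ℝ => v)
      ((hDu x u h).mono fun v hv => (hD _ hv).2.2.2.symm)).unique h6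
    refine hs.congr_deriv (Eq.symm ?_)
    simp only at h3
    rw [div_eq_iff h3]
    linarith
  have hSx : ∀ x u : ℝ, (x, u) ∈ D → HasDerivAt (fun t => S (t, u))
      (-(deriv up x + c₁ (S (x, u)) * deriv y₁ x + c₂ (S (x, u)) * deriv y₂ x) /
        (deriv c₁ (S (x, u)) * y₁ x + deriv c₂ (S (x, u)) * y₂ x)) x := by
    intro x u h
    obtain ⟨h1, h2, h3, h4⟩ := hD _ h
    have hdiff : DifferentiableAt ℝ (fun t => S (t, u)) x :=
      (h1.differentiableAt (by norm_num)).comp (f := fun t : ℝ => (t, u)) x (by fun_prop)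
    have hs := hdiff.hasDerivAt
    have hc1 := (hdJ c₁ hc₁ _ h2).comp x hs
    have hc2 := (hdJ c₂ hc₂ _ h2).comp x hs
    have h5 := ((hd up hups x).add (hc1.mul (hd y₁ hy₁s x))).add (hc2.mul (hd y₂ hy₂s x))
    have h6 : HasDerivAt (fun t : ℝ => u) 0 x := hasDerivAt_const x u
    have h7 := (h5.congr_of_eventuallyEq (f₁ := fun t : ℝ => u)
      ((hDx x u h).mono fun v hv => (hD _ hv).2.2.2.symm)).unique h6
    refine hs.congr_deriv (Eq.symm ?_)
    simp only at h3
    simp only [Function.comp] at h7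
    rw [div_eq_iff h3]
    linarith
  set φ : ℝ × ℝ → ℝ := fun p =>
    deriv up p.1 + c₁ (S p) * deriv y₁ p.1 + c₂ (S p) * deriv y₂ p.1 with hφ
  have hφu : ∀ x u : ℝ, (x, u) ∈ D → pderivU φ x u =
      (deriv c₁ (S (x, u)) * deriv y₁ x + deriv c₂ (S (x, u)) * deriv y₂ x) /
        (deriv c₁ (S (x, u)) * y₁ x + deriv c₂ (S (x, u)) * y₂ x) := by
    intro x u h
    obtain ⟨h1, h2, h3, h4⟩ := hD _ h
    have hs := hSu x u h
    have hc1 := (hdJ c₁ hc₁ _ h2).comp u hs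
    have hc2 := (hdJ c₂ hc₂ _ h2).comp u hs
    have h5 := ((hc1.mul_const (deriv y₁ x)).const_add (deriv up x)).add
      (hc2.mul_const (deriv y₂ x))
    refine (HasDerivAt.deriv h5).trans ?_
    ring
  refine ⟨D, φ, I₀, J₀, hDo, (hIJ s₀ hsJ x₀ hxI).1, hI, hxI, hJo, hsJ, hJJ, ?_, ?_, ?_⟩
  · intro p hp
    obtain ⟨h1, h2, h3, h4⟩ := hD _ hp
    have k1 : ContDiffAt ℝ 2 (fun p => c₁ (S p)) p :=
      ((hca c₁ hc₁ _ h2).of_le hle).comp p h1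
    have k2 : ContDiffAt ℝ 2 (fun p => c₂ (S p)) p :=
      ((hca c₂ hc₂ _ h2).of_le hle).comp p h1
    have k3 : ∀ g : ℝ → ℝ, ContDiff ℝ (⊤ : ℕ∞) g →
        ContDiffAt ℝ 2 (fun p : ℝ × ℝ => deriv g p.1) p := fun g hg =>
      (((hds g hg).of_le hle).comp contDiff_fst).contDiffAt
    exact (((k3 _ hups).add (k1.mul (k3 _ hy₁s))).add (k2.mul (k3 _ hy₂s))).contDiffWithinAt
  · intro s hs x hx
    obtain ⟨h1, h2⟩ := hIJ s hs x hx
    refine ⟨h1, ?_⟩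
    simp only [hφ, h2]
    exact ((hd up hups x).add ((hd y₁ hy₁s x).const_mul (c₁ s))).add
      ((hd y₂ hy₂s x).const_mul (c₂ s))
  · intro x u h
    obtain ⟨h1, h2, h3, h4⟩ := hD _ h
    have dd1 := hdJ _ (hdsJ c₁ hc₁) _ h2
    have dd2 := hdJ _ (hdsJ c₂ hc₂) _ h2
    simp only at h3
    have hs := hSu x u h
    have e1 := dd1.comp u hs
    have e2 := dd2.comp u hs
    have h5 := ((e1.mul_const (deriv y₁ x)).add (e2.mul_const (deriv y₂ x))).div
      ((e1.mul_const (y₁ x)).add (e2.mul_const (y₂ x))) h3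
    have hUU := (h5.congr_of_eventuallyEq (f₁ := fun v => pderivU φ x v)
      ((hDu x u h).mono fun v hv => hφu x v hv)).deriv
    have hs' := hSx x u h
    have e1' := dd1.comp x hs'
    have e2' := dd2.comp x hs'
    have h5' := ((e1'.mul (hd _ (hds _ hy₁s) x)).add (e2'.mul (hd _ (hds _ hy₂s) x))).div
      ((e1'.mul (hd y₁ hy₁s x)).add (e2'.mul (hd y₂ hy₂s x))) h3
    have hXU := (h5'.congr_of_eventuallyEq (f₁ := fun t => pderivU φ t u)
      ((hDx x u h).mono fun v hv => hφu v u hv)).deriv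
    clear hs e1 e2 h5 hs' e1' e2' h5'
    have z1 : deriv (deriv y₁) x = - (κ x * y₁ x) := by linarith [hy₁ x]
    have z2 : deriv (deriv y₂) x = - (κ x * y₂ x) := by linarith [hy₂ x]
    unfold curvature pderivXU pderivUU
    rw [hXU, hUU, hφu x u h, z1, z2]
    simp only [hφ, Function.comp, Pi.add_apply, Pi.mul_apply]
    clear hUU hXU
    generalize deriv (deriv c₁) (S (x, u)) = p1
    generalize deriv (deriv c₂) (S (x, u)) = p2
    generalize deriv c₁ (S (x, u)) = q1 at h3 ⊢
    generalize deriv c₂ (S (x, u)) = q2 at h3 ⊢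
    generalize c₁ (S (x, u)) = r1
    generalize c₂ (S (x, u)) = r2
    field_simp
    ring
end

section
/- Let D ⊆ ℝ × ℝ be open, φ : D → ℝ twice continuously differentiable, and κ : ℝ → ℝ continuous with 𝒦(x,u) = κ(x) for all (x,u) ∈ D. Let f be a solution of u' = φ(x,u) on an interval I and fix x₀ ∈ I. Then the function δ(x) := exp(∫_{x₀}^{x} ∂ᵤφ(τ, f(τ)) dτ) is strictly positive, twice differentiable, and satisfies the Schrödinger equation δ''(x) + κ(x)·δ(x) = 0 for all x ∈ I. -/
theorem aux_G (D : Set (ℝ × ℝ)) (hD : IsOpen D)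
    (φ : ℝ × ℝ → ℝ) (hφ : ContDiffOn ℝ 2 φ D) (x u : ℝ) (h : (x, u) ∈ D) :
    ∃ L : ℝ × ℝ →L[ℝ] ℝ, HasFDerivAt (fun p : ℝ × ℝ => pderivU φ p.1 p.2) L (x, u) ∧
      pderivXU φ x u = L (1, 0) ∧ pderivUU φ x u = L (0, 1) := by
  have h1 : ∀ p ∈ D, pderivU φ p.1 p.2 = fderiv ℝ φ p (0, 1) := by
    rintro ⟨a, b⟩ hp
    have hd : DifferentiableAt ℝ φ (a, b) :=
      ((hφ.contDiffAt (hD.mem_nhds hp)).differentiableAt (by norm_num))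
    have hc : HasDerivAt (fun v : ℝ => ((a, v) : ℝ × ℝ)) (0, 1) b :=
      (hasDerivAt_const b a).prodMk (hasDerivAt_id b)
    exact (hd.hasFDerivAt.comp_hasDerivAt (f := fun v : ℝ => ((a, v) : ℝ × ℝ)) b hc).deriv
  have h2 : DifferentiableAt ℝ (fun p => fderiv ℝ φ p (0, 1)) (x, u) := by
    have := ((hφ.contDiffAt (hD.mem_nhds h)).fderiv_right (m := 1) (by norm_num))
    exact (this.differentiableAt (by norm_num)).clm_apply (differentiableAt_const _)
  have h3 : HasFDerivAt (fun p : ℝ × ℝ => pderivU φ p.1 p.2)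
      (fderiv ℝ (fun p => fderiv ℝ φ p (0, 1)) (x, u)) (x, u) := by
    refine h2.hasFDerivAt.congr_of_eventuallyEq ?_
    filter_upwards [hD.mem_nhds h] with p hp using h1 p hp
  refine ⟨_, h3, ?_, ?_⟩
  · have hc : HasDerivAt (fun v : ℝ => ((v, u) : ℝ × ℝ)) (1, 0) x :=
      (hasDerivAt_id x).prodMk (hasDerivAt_const x u)
    exact (h3.comp_hasDerivAt (f := fun v : ℝ => ((v, u) : ℝ × ℝ)) x hc).deriv
  · have hc : HasDerivAt (fun v : ℝ => ((x, v) : ℝ × ℝ)) (0, 1) u :=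
      (hasDerivAt_const u x).prodMk (hasDerivAt_id u)
    exact (h3.comp_hasDerivAt (f := fun v : ℝ => ((x, v) : ℝ × ℝ)) u hc).deriv

/-- If `𝒦(x,u) = κ(x)` on `D` with `κ` continuous, `f` solves
`u' = φ(x,u)` on an open interval `I` and `x₀ ∈ I`, then
`δ(x) := exp(∫_{x₀}^{x} ∂ᵤφ(τ, f(τ)) dτ)` is strictly positive, twice differentiable on
`I`, and satisfies `δ'' + κ·δ = 0` on `I`. -/
theorem stmt_9 (D : Set (ℝ × ℝ)) (hD : IsOpen D)
    (φ : ℝ × ℝ → ℝ) (hφ : ContDiffOn ℝ 2 φ D)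
    (κ : ℝ → ℝ) (hκcont : Continuous κ)
    (hκ : ∀ x u : ℝ, (x, u) ∈ D → curvature φ x u = κ x)
    (I : Set ℝ) (hI : IsOpen I) (hIconn : IsPreconnected I)
    (f : ℝ → ℝ)
    (hfD : ∀ x ∈ I, (x, f x) ∈ D)
    (hf : ∀ x ∈ I, HasDerivAt f (φ (x, f x)) x)
    (x₀ : ℝ) (hx₀ : x₀ ∈ I) :
    (∀ x : ℝ, 0 < Real.exp (∫ τ in x₀..x, pderivU φ τ (f τ))) ∧
    ∃ δ' : ℝ → ℝ,
      (∀ x ∈ I, HasDerivAt (fun t => Real.exp (∫ τ in x₀..t, pderivU φ τ (f τ)))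
        (δ' x) x) ∧
      (∀ x ∈ I, HasDerivAt δ'
        (-(κ x * Real.exp (∫ τ in x₀..x, pderivU φ τ (f τ)))) x) := by
  refine ⟨fun x => Real.exp_pos _, ?_⟩
  have hg : ∀ x ∈ I, HasDerivAt (fun t => pderivU φ t (f t))
      (-κ x - pderivU φ x (f x) ^ 2) x := by
    intro x hx
    obtain ⟨L, hL, hx1, hu1⟩ := aux_G D hD φ hφ x (f x) (hfD x hx)
    have hc : HasDerivAt (fun v : ℝ => ((v, f v) : ℝ × ℝ)) (1, φ (x, f x)) x :=
      (hasDerivAt_id x).prodMk (hf x hx)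
    have := hL.comp_hasDerivAt (f := fun v : ℝ => ((v, f v) : ℝ × ℝ)) x hc
    refine this.congr_deriv ?_
    have hk := hκ x (f x) (hfD x hx)
    unfold curvature at hk
    have e : ((1, φ (x, f x)) : ℝ × ℝ) = (1, 0) + φ (x, f x) • (0, 1) := by simp
    rw [e, map_add, map_smul, ← hx1, ← hu1, smul_eq_mul, ← hk]
    ring
  have hcont : ContinuousOn (fun t => pderivU φ t (f t)) I :=
    fun x hx => (hg x hx).continuousAt.continuousWithinAt
  have hδ : ∀ x ∈ I, HasDerivAt (fun t => Real.exp (∫ τ in x₀..t, pderivU φ τ (f τ)))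
      (Real.exp (∫ τ in x₀..x, pderivU φ τ (f τ)) * pderivU φ x (f x)) x := by
    intro x hx
    refine HasDerivAt.exp ?_
    refine intervalIntegral.integral_hasDerivAt_right ?_ ?_ (hg x hx).continuousAt
    · exact (hcont.mono (hIconn.ordConnected.uIcc_subset hx₀ hx)).intervalIntegrable
    · exact hcont.stronglyMeasurableAtFilter hI x hx
  refine ⟨fun x => Real.exp (∫ τ in x₀..x, pderivU φ τ (f τ)) * pderivU φ x (f x), hδ, ?_⟩
  intro x hx
  refine ((hδ x hx).mul (hg x hx)).congr_deriv ?_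
  ring
end

section
/- Let D ⊆ ℝ × ℝ be open with connected fibers, φ : D → ℝ twice continuously differentiable, and κ : ℝ → ℝ with 𝒦(x,u) = κ(x) on D. If u₀ and u₁ are two solutions of u' = φ(x,u) on the same interval I, then the difference y := u₁ − u₀ is twice differentiable and satisfies the homogeneous equation y''(x) + κ(x)·y(x) = 0 on I; moreover, if u₀ ≠ u₁ at some point of I, then y is a non-zero solution of this equation. -/
lemma aux_G_s11 (D : Set (ℝ × ℝ)) (hD : IsOpen D) (φ : ℝ × ℝ → ℝ) (hφ : ContDiffOn ℝ 2 φ D)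
    (x u : ℝ) (hp : (x, u) ∈ D) :
    HasDerivAt (fun v => fderiv ℝ φ (x, v) (1, φ (x, v))) (-curvature φ x u) u := by
  have hc : ContDiffAt ℝ 2 φ (x, u) := hφ.contDiffAt (hD.mem_nhds hp)
  have hdiff : ∀ p ∈ D, DifferentiableAt ℝ φ p := fun p hp' =>
    (hφ.contDiffAt (hD.mem_nhds hp')).differentiableAt (by norm_num)
  have hF : DifferentiableAt ℝ (fderiv ℝ φ) (x, u) :=
    (hc.fderiv_right (m := 1) (by norm_num)).differentiableAt (by norm_num)
  have hsymm : IsSymmSndFDerivAt ℝ φ (x, u) := hc.isSymmSndFDerivAt (by simp)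
  have hv : ∀ v, HasDerivAt (fun v : ℝ => (x, v)) ((0 : ℝ), (1 : ℝ)) v := fun v =>
    (hasDerivAt_const v x).prodMk (hasDerivAt_id v)
  have ht : ∀ t, HasDerivAt (fun t : ℝ => (t, u)) ((1 : ℝ), (0 : ℝ)) t := fun t =>
    (hasDerivAt_id t).prodMk (hasDerivAt_const t u)
  have hU : ∀ a b, (a, b) ∈ D → pderivU φ a b = fderiv ℝ φ (a, b) (0, 1) := by
    intro a b hab
    have h2 : HasDerivAt (fun v : ℝ => (a, v)) ((0 : ℝ), (1 : ℝ)) b :=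
      (hasDerivAt_const b a).prodMk (hasDerivAt_id b)
    exact ((hdiff _ hab).hasFDerivAt.comp_hasDerivAt b h2).deriv
  have hFv := hF.hasFDerivAt.comp_hasDerivAt u (hv u)
  have hFt := hF.hasFDerivAt.comp_hasDerivAt x (ht x)
  have hXU : pderivXU φ x u = fderiv ℝ (fderiv ℝ φ) (x, u) (1, 0) (0, 1) := by
    have h1 : HasDerivAt (fun t => fderiv ℝ φ (t, u) ((0 : ℝ), (1 : ℝ)))
        (fderiv ℝ (fderiv ℝ φ) (x, u) (1, 0) (0, 1)) x := by
      simpa using hFt.clm_apply (hasDerivAt_const x ((0 : ℝ), (1 : ℝ)))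
    refine (h1.congr_of_eventuallyEq ?_).deriv
    filter_upwards [(ht x).continuousAt.preimage_mem_nhds (hD.mem_nhds hp)] with t h
    exact hU t u h
  have hUU : pderivUU φ x u = fderiv ℝ (fderiv ℝ φ) (x, u) (0, 1) (0, 1) := by
    have h1 : HasDerivAt (fun v => fderiv ℝ φ (x, v) ((0 : ℝ), (1 : ℝ)))
        (fderiv ℝ (fderiv ℝ φ) (x, u) (0, 1) (0, 1)) u := by
      simpa using hFv.clm_apply (hasDerivAt_const u ((0 : ℝ), (1 : ℝ)))
    refine (h1.congr_of_eventuallyEq ?_).deriv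
    filter_upwards [(hv u).continuousAt.preimage_mem_nhds (hD.mem_nhds hp)] with t h
    exact hU x t h
  have hφv := (hdiff _ hp).hasFDerivAt.comp_hasDerivAt u (hv u)
  have hpair := (hasDerivAt_const u (1 : ℝ)).prodMk hφv
  have hG := hFv.clm_apply hpair
  refine hG.congr_deriv ?_
  have e1 : ((1 : ℝ), φ (x, u)) = (1, 0) + φ (x, u) • ((0 : ℝ), (1 : ℝ)) := by simp
  have e2 : ((0 : ℝ), fderiv ℝ φ (x, u) (0, 1))
      = fderiv ℝ φ (x, u) (0, 1) • ((0 : ℝ), (1 : ℝ)) := by simp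
  have e3 := hsymm.eq (0, 1) (1, 0)
  simp only [Function.comp_apply]
  rw [e1, e2, map_add, map_smul, map_smul, e3, curvature, hXU, hUU, hU x u hp]
  simp only [smul_eq_mul]
  ring

/-- If `D` has connected fibers, `𝒦(x,u) = κ(x)` on `D`, and `u₀, u₁`
are two solutions of `u' = φ(x,u)` on the same open interval `I`, then `y := u₁ − u₀` is
twice differentiable and satisfies `y'' + κ·y = 0` on `I`; moreover if `u₀ ≠ u₁` at some
point of `I`, then `y` is a non-zero solution. -/
theorem stmt_11 (D : Set (ℝ × ℝ)) (hD : IsOpen D)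
    (hfib : ∀ x : ℝ, Set.OrdConnected {u : ℝ | (x, u) ∈ D})
    (φ : ℝ × ℝ → ℝ) (hφ : ContDiffOn ℝ 2 φ D)
    (κ : ℝ → ℝ) (hκ : ∀ x u : ℝ, (x, u) ∈ D → curvature φ x u = κ x)
    (I : Set ℝ) (hI : IsOpen I) (u₀ u₁ : ℝ → ℝ)
    (hu₀D : ∀ x ∈ I, (x, u₀ x) ∈ D) (hu₀ : ∀ x ∈ I, HasDerivAt u₀ (φ (x, u₀ x)) x)
    (hu₁D : ∀ x ∈ I, (x, u₁ x) ∈ D) (hu₁ : ∀ x ∈ I, HasDerivAt u₁ (φ (x, u₁ x)) x) :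
    ((∀ x ∈ I, HasDerivAt (fun t => u₁ t - u₀ t) (φ (x, u₁ x) - φ (x, u₀ x)) x) ∧
      (∀ x ∈ I, HasDerivAt (fun t => φ (t, u₁ t) - φ (t, u₀ t))
        (-(κ x * (u₁ x - u₀ x))) x)) ∧
    ((∃ x ∈ I, u₀ x ≠ u₁ x) → ∃ x ∈ I, u₁ x - u₀ x ≠ 0) := by
  have hsol : ∀ u : ℝ → ℝ, ∀ x, (x, u x) ∈ D → HasDerivAt u (φ (x, u x)) x →
      HasDerivAt (fun t => φ (t, u t)) (fderiv ℝ φ (x, u x) (1, φ (x, u x))) x := by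
    intro u x hp hu
    have hd : DifferentiableAt ℝ φ (x, u x) :=
      (hφ.contDiffAt (hD.mem_nhds hp)).differentiableAt (by norm_num)
    exact hd.hasFDerivAt.comp_hasDerivAt x ((hasDerivAt_id x).prodMk hu)
  refine ⟨⟨fun x hx => (hu₁ x hx).sub (hu₀ x hx), fun x hx => ?_⟩, ?_⟩
  · refine ((hsol u₁ x (hu₁D x hx) (hu₁ x hx)).sub
      (hsol u₀ x (hu₀D x hx) (hu₀ x hx))).congr_deriv ?_
    have hh : ∀ v ∈ {u : ℝ | (x, u) ∈ D}, HasDerivWithinAt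
        (fun v => fderiv ℝ φ (x, v) (1, φ (x, v)) + κ x * v) 0 {u : ℝ | (x, u) ∈ D} v := by
      intro v hv
      have h1 := (aux_G_s11 D hD φ hφ x v hv).add ((hasDerivAt_id v).const_mul (κ x))
      rw [hκ x v hv] at h1
      exact (h1.congr_deriv (by ring)).hasDerivWithinAt
    have := Convex.norm_image_sub_le_of_norm_hasDerivWithin_le (C := 0) hh (by simp)
      (hfib x).convex (hu₀D x hx) (hu₁D x hx)
    rw [zero_mul, norm_le_zero_iff] at this
    linarith
  · rintro ⟨x, hx, hne⟩
    exact ⟨x, hx, sub_ne_zero.mpr (Ne.symm hne)⟩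
end

section
/- Let φ(x,u) := u/(2x) + (3/(2x))·√(u² − 4x) on the open set D := {(x,u) ∈ ℝ × ℝ : x > 0, u² > 4x}. Then the curvature of the ODE u' = φ(x,u) satisfies 𝒦(x,u) = −2/x² for all (x,u) ∈ D. -/
/-- The right-hand side of the nonlinear Euler–Cauchy flow
`u' = u/(2x) + (3/(2x))·√(u² − 4x)`. -/
noncomputable def phiEC (p : ℝ × ℝ) : ℝ :=
  p.2 / (2 * p.1) + 3 / (2 * p.1) * Real.sqrt (p.2 ^ 2 - 4 * p.1)

theorem phiEC_pderivU (x u : ℝ) (hx : 0 < x) (h : 4 * x < u ^ 2) :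
    pderivU phiEC x u = 1 / (2 * x) + 3 / (2 * x) * (u / Real.sqrt (u ^ 2 - 4 * x)) := by
  have hp : 0 < u ^ 2 - 4 * x := by linarith
  have h1 : HasDerivAt (fun v : ℝ => v ^ 2 - 4 * x) (2 * u) u := by
    simpa using (hasDerivAt_pow 2 u).sub_const (4 * x)
  have h2 := ((hasDerivAt_id u).div_const (2 * x)).add ((h1.sqrt hp.ne').const_mul (3 / (2 * x)))
  have h3 : pderivU phiEC x u = _ := h2.deriv
  rw [h3, mul_div_mul_left _ _ (two_ne_zero)]

/-- On `D = {(x,u) : x > 0, u² > 4x}`, the curvature of the ODE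
`u' = u/(2x) + (3/(2x))·√(u² − 4x)` equals `−2/x²`. -/
theorem stmt_12 :
    ∀ x u : ℝ, 0 < x → 4 * x < u ^ 2 → curvature phiEC x u = -2 / x ^ 2 := by
  intro x u hx h
  have hp : 0 < u ^ 2 - 4 * x := by linarith
  have hs : 0 < Real.sqrt (u ^ 2 - 4 * x) := Real.sqrt_pos.mpr hp
  have hsq : Real.sqrt (u ^ 2 - 4 * x) ^ 2 = u ^ 2 - 4 * x := Real.sq_sqrt hp.le
  have hU := phiEC_pderivU x u hx h
  have hUU : pderivUU phiEC x u = 3 / (2 * x) *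
      ((1 * Real.sqrt (u ^ 2 - 4 * x) - u * (2 * u / (2 * Real.sqrt (u ^ 2 - 4 * x)))) /
        Real.sqrt (u ^ 2 - 4 * x) ^ 2) := by
    have h1 : HasDerivAt (fun v : ℝ => v ^ 2 - 4 * x) (2 * u) u := by
      simpa using (hasDerivAt_pow 2 u).sub_const (4 * x)
    have h2 := ((((hasDerivAt_id u).div (h1.sqrt hp.ne') hs.ne').const_mul
      (3 / (2 * x))).const_add (1 / (2 * x)))
    refine (Filter.EventuallyEq.deriv_eq ?_).trans h2.deriv
    have ho : ∀ᶠ v in nhds u, 4 * x < v ^ 2 :=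
      (continuous_pow 2).continuousAt.eventually (lt_mem_nhds h)
    filter_upwards [ho] with v hv
    exact phiEC_pderivU x v hx hv
  have hXU : pderivXU phiEC x u = -(2 * 1) / (2 * x) ^ 2 +
      (3 * (-(2 * 1) / (2 * x) ^ 2) * (u / Real.sqrt (u ^ 2 - 4 * x)) +
        3 * (2 * x)⁻¹ * (u * (-(-(4 * 1) / (2 * Real.sqrt (u ^ 2 - 4 * x))) /
          Real.sqrt (u ^ 2 - 4 * x) ^ 2))) := by
    have h1 : HasDerivAt (fun t : ℝ => u ^ 2 - 4 * t) (-(4 * 1)) x :=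
      ((hasDerivAt_id x).const_mul 4).const_sub (u ^ 2)
    have h0 : HasDerivAt (fun t : ℝ => (2 * t)⁻¹) (-(2 * 1) / (2 * x) ^ 2) x :=
      ((hasDerivAt_id x).const_mul 2).inv (by simpa using hx.ne')
    have h2 := h0.add ((h0.const_mul 3).mul (((h1.sqrt hp.ne').inv hs.ne').const_mul u))
    refine (Filter.EventuallyEq.deriv_eq ?_).trans (h2.deriv.trans ?_)
    · have ho : ∀ᶠ t in nhds x, 4 * t < u ^ 2 :=
        (continuous_const.mul continuous_id).continuousAt.eventually (gt_mem_nhds h)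
      filter_upwards [ho, lt_mem_nhds hx] with t ht ht0
      rw [phiEC_pderivU t u ht0 ht]
      simp [div_eq_mul_inv]
    · simp [div_eq_mul_inv]
  unfold curvature
  rw [hU, hUU, hXU]
  unfold phiEC
  simp only
  generalize Real.sqrt (u ^ 2 - 4 * x) = s at *
  have hu : u ^ 2 = s ^ 2 + 4 * x := by linarith
  field_simp
  ring_nf
  have h4 : u ^ 4 = (s ^ 2 + 4 * x) ^ 2 := by rw [← hu]; ring
  have h3 : u ^ 3 = u * (s ^ 2 + 4 * x) := by rw [← hu]; ring
  try rw [h4]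
  try rw [h3]
  try rw [hu]
  ring
end
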